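/- arXiv:2108.13927 — 3 statements merged into one kernel-verified Lean document; each statement's English description precedes it below -/
import Mathlib

section
/- Consider C_n^c with state set Q = {1,…,n}. Let S ⊆ Q, let T be a proper subset of {1,…,n−c}, and let w ∈ {a,b}* with w ≠ ε be a word of minimum length such that S·w = T (meaning q·w is defined for all q ∈ S, the image of S under w equals T, and every word v with S·v = T satisfies |v| ≥ |w|). Then: (i) if S = Q, then w starts with b^{c+1}; (ii) if S ⊆ {1,…,n−c} and n−c ∈ S, then w starts with b^c a or with b^{c+1}; (iii) if S ⊆ {1,…,n−c} and n−c ∉ S, then w starts with a. -/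
/-- Partial transition function of the PFA `C_n^c`. `false` is letter `a`, `true` is letter `b`. -/
def cernyStep (c n q : ℕ) : Bool → Option ℕ
  | false =>
      if q ≤ n - c - 1 then some (q + 1)
      else if q = n then some 1 else none
  | true =>
      if q ≤ n - c - 1 then some q
      else if q = n then some 1 else some (q + 1)

/-- Action of a word on a state (`none` if undefined at some step). -/
def cernyRun (c n : ℕ) (q : ℕ) (w : List Bool) : Option ℕ :=
  List.foldlM (cernyStep c n) q w

/-- A word is synchronizing for `C_n^c`. -/
def IsSync (c n : ℕ) (w : List Bool) : Prop :=
  ∃ qs : ℕ, ∀ q ∈ Finset.Icc 1 n, cernyRun c n q w = some qs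

/-- `S·w = T` in `C_n^c`: the action of `w` is defined on every state of `S`, and the image of
`S` under `w` is exactly `T`. -/
def MapsOnto (c n : ℕ) (S T : Finset ℕ) (w : List Bool) : Prop :=
  (∀ q ∈ S, ∃ t ∈ T, cernyRun c n q w = some t) ∧
  (∀ t ∈ T, ∃ q ∈ S, cernyRun c n q w = some t)

theorem run_nil (c n q : ℕ) : cernyRun c n q [] = some q := rfl

theorem run_cons (c n q : ℕ) (x : Bool) (w : List Bool) :
    cernyRun c n q (x :: w) = (cernyStep c n q x).bind (fun r => cernyRun c n r w) := rfl

theorem run_append (c n q : ℕ) (v w : List Bool) :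
    cernyRun c n q (v ++ w) = (cernyRun c n q v).bind (fun r => cernyRun c n r w) := by
  simp only [cernyRun, List.foldlM_append]
  rfl

theorem run_low (c n q k : ℕ) (h : q ≤ n - c - 1) :
    cernyRun c n q (List.replicate k true) = some q := by
  induction k with
  | zero => rfl
  | succ k ih => rw [List.replicate_succ, run_cons]; simp [cernyStep, h, ih]

theorem run_up (c n k : ℕ) (hn : c + 2 ≤ n) : ∀ q, n - c ≤ q → q + k ≤ n →
    cernyRun c n q (List.replicate k true) = some (q + k) := by
  induction k with
  | zero => intro q _ _; rfl
  | succ k ih =>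
    intro q h1 h2
    rw [List.replicate_succ, run_cons]
    have a1 : ¬ q ≤ n - c - 1 := by omega
    have a2 : ¬ q = n := by omega
    simp only [cernyStep, a1, a2, if_false, Option.bind_some]
    rw [ih (q + 1) (by omega) (by omega)]
    congr 1; omega

theorem run_top (c n k : ℕ) (hn : c + 2 ≤ n) :
    cernyRun c n n (List.replicate (k + 1) true) = some 1 := by
  rw [List.replicate_succ, run_cons]
  have a1 : ¬ n ≤ n - c - 1 := by omega
  simp only [cernyStep, a1, if_false, if_true, Option.bind_some]
  exact run_low c n 1 k (by omega)

theorem run_high (c n q : ℕ) (hn : c + 2 ≤ n) (h1 : n - c < q) (h2 : q ≤ n) :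
    cernyRun c n q (List.replicate c true) = some 1 := by
  have e : List.replicate c true
      = List.replicate (n - q) true ++ List.replicate ((c - (n - q) - 1) + 1) true := by
    rw [← List.replicate_add]; congr 1; omega
  rw [e, run_append, run_up c n _ hn q (by omega) (by omega), Option.bind_some]
  have : q + (n - q) = n := by omega
  rw [this]
  exact run_top c n _ hn

theorem run_m (c n : ℕ) (hn : c + 2 ≤ n) :
    cernyRun c n (n - c) (List.replicate c true) = some n := by
  rw [run_up c n c hn (n - c) le_rfl (by omega)]; congr 1; omega

theorem prefix_aux (c n k t : ℕ) (hn : c + 2 ≤ n) (ht : t ≤ n - c) : ∀ q w, n - c ≤ q → q + k = n →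
    cernyRun c n q w = some t → (w = [] ∧ q = n - c) ∨ List.replicate k true <+: w := by
  induction k with
  | zero => intro q w _ _ _; right; simp
  | succ k ih =>
    intro q w h1 h2 h
    have a1 : ¬ q ≤ n - c - 1 := by omega
    have a2 : ¬ q = n := by omega
    match w, h with
    | [], h =>
      left
      rw [run_nil] at h
      have := Option.some.inj h
      exact ⟨rfl, by omega⟩
    | false :: u, h =>
      rw [run_cons] at h
      simp [cernyStep, a1, a2] at h
    | true :: u, h =>
      rw [run_cons] at h
      simp only [cernyStep, a1, a2, if_false, Option.bind_some] at h
      rcases ih (q + 1) u (by omega) (by omega) h with ⟨_, h'⟩ | h'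
      · omega
      · right
        rw [List.replicate_succ]
        exact (List.prefix_cons_inj true).2 h'

theorem maps_append (c n : ℕ) (S U T : Finset ℕ) (x v : List Bool) (h : MapsOnto c n S U x) :
    MapsOnto c n S T (x ++ v) ↔ MapsOnto c n U T v := by
  constructor
  · rintro ⟨h1, h2⟩
    constructor
    · intro q hq
      obtain ⟨s, hs, e⟩ := h.2 q hq
      obtain ⟨t, ht, e'⟩ := h1 s hs
      rw [run_append, e] at e'
      exact ⟨t, ht, e'⟩
    · intro t ht
      obtain ⟨s, hs, e⟩ := h2 t ht
      obtain ⟨u, hu, e'⟩ := h.1 s hs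
      rw [run_append, e'] at e
      exact ⟨u, hu, e⟩
  · rintro ⟨h1, h2⟩
    constructor
    · intro s hs
      obtain ⟨u, hu, e⟩ := h.1 s hs
      obtain ⟨t, ht, e'⟩ := h1 u hu
      exact ⟨t, ht, by rw [run_append, e]; exact e'⟩
    · intro t ht
      obtain ⟨u, hu, e⟩ := h2 t ht
      obtain ⟨s, hs, e'⟩ := h.2 u hu
      exact ⟨s, hs, by rw [run_append, e']; exact e⟩

/-- The set reached from `Q` by `b^c`. -/
def setX (c n : ℕ) : Finset ℕ := insert n (Finset.Icc 1 (n - c - 1))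

theorem maps_Q (c n : ℕ) (hn : c + 2 ≤ n) :
    MapsOnto c n (Finset.Icc 1 n) (setX c n) (List.replicate c true) := by
  constructor
  · intro q hq
    rw [Finset.mem_Icc] at hq
    rcases lt_trichotomy q (n - c) with h | h | h
    · exact ⟨q, by simp [setX]; omega, run_low c n q c (by omega)⟩
    · exact ⟨n, by simp [setX], by rw [h]; exact run_m c n hn⟩
    · exact ⟨1, by simp [setX]; omega, run_high c n q hn h hq.2⟩
  · intro t ht
    simp only [setX, Finset.mem_insert, Finset.mem_Icc] at ht
    rcases ht with h | h
    · exact ⟨n - c, by simp; omega, by rw [h]; exact run_m c n hn⟩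
    · exact ⟨t, by simp; omega, run_low c n t c (by omega)⟩

theorem maps_I (c n : ℕ) (hn : c + 2 ≤ n) :
    MapsOnto c n (Finset.Icc 1 (n - c)) (setX c n) (List.replicate c true) := by
  constructor
  · intro q hq
    exact (maps_Q c n hn).1 q (by simp at hq ⊢; omega)
  · intro t ht
    simp only [setX, Finset.mem_insert, Finset.mem_Icc] at ht
    rcases ht with h | h
    · exact ⟨n - c, by simp; omega, by rw [h]; exact run_m c n hn⟩
    · exact ⟨t, by simp; omega, run_low c n t c (by omega)⟩

theorem maps_X (c n : ℕ) (hn : c + 2 ≤ n) :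
    MapsOnto c n (setX c n) (Finset.Icc 1 (n - c)) [false] := by
  have hN : cernyRun c n n [false] = some 1 := by
    have a1 : ¬ n ≤ n - c - 1 := by omega
    rw [run_cons]; simp [cernyStep, a1, run_nil]
  have hL : ∀ q, q ≤ n - c - 1 → cernyRun c n q [false] = some (q + 1) := by
    intro q h
    rw [run_cons]; simp [cernyStep, h, run_nil]
  constructor
  · intro q hq
    simp only [setX, Finset.mem_insert, Finset.mem_Icc] at hq
    rcases hq with h | h
    · exact ⟨1, by simp; omega, by rw [h]; exact hN⟩
    · exact ⟨q + 1, by simp; omega, hL q h.2⟩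
  · intro t ht
    rw [Finset.mem_Icc] at ht
    by_cases h : t = 1
    · exact ⟨n, by simp [setX], by rw [h]; exact hN⟩
    · exact ⟨t - 1, by simp [setX]; omega, by rw [hL _ (by omega)]; congr 1; omega⟩

theorem maps_nil (c n : ℕ) (S T : Finset ℕ) : MapsOnto c n S T [] ↔ S = T := by
  constructor
  · rintro ⟨h1, h2⟩
    ext q
    constructor
    · intro hq
      obtain ⟨t, ht, e⟩ := h1 q hq
      rw [run_nil] at e
      rw [Option.some.inj e]; exact ht
    · intro hq
      obtain ⟨t, ht, e⟩ := h2 q hq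
      rw [run_nil] at e
      rw [← Option.some.inj e]; exact ht
  · rintro rfl
    exact ⟨fun q hq => ⟨q, hq, rfl⟩, fun q hq => ⟨q, hq, rfl⟩⟩

/-- A word that is defined on a set containing `n-c` starts with `b^c`. -/
theorem prefix_m (c n : ℕ) (hn : c + 2 ≤ n) (S T : Finset ℕ) (hT : T ⊆ Finset.Icc 1 (n - c))
    (w : List Bool) (hw : w ≠ []) (hm : n - c ∈ S) (h : MapsOnto c n S T w) :
    ∃ v, w = List.replicate c true ++ v := by
  obtain ⟨t, ht, e⟩ := h.1 _ hm
  have := hT ht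
  rw [Finset.mem_Icc] at this
  rcases prefix_aux c n c t hn this.2 (n - c) w le_rfl (by omega) e with h' | ⟨v, h'⟩
  · exact absurd h'.1 hw
  · exact ⟨v, h'.symm⟩

/-- ... followed by at least one more letter. -/
theorem prefix_m' (c n : ℕ) (hn : c + 2 ≤ n) (S T : Finset ℕ) (hT : T ⊆ Finset.Icc 1 (n - c))
    (w : List Bool) (hw : w ≠ []) (hm : n - c ∈ S) (h : MapsOnto c n S T w) :
    ∃ x v, w = List.replicate c true ++ x :: v := by
  obtain ⟨v, rfl⟩ := prefix_m c n hn S T hT w hw hm h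
  cases v with
  | cons x v => exact ⟨x, v, rfl⟩
  | nil =>
    exfalso
    rw [List.append_nil] at h hw
    obtain ⟨t, ht, e⟩ := h.1 _ hm
    rw [run_m c n hn] at e
    have e := Option.some.inj e
    have := hT ht
    rw [Finset.mem_Icc] at this
    have hc : c = 0 := by omega
    subst hc
    exact hw rfl

theorem prefix_true (c : ℕ) (v : List Bool) :
    List.replicate (c + 1) true <+: List.replicate c true ++ true :: v := by
  refine ⟨v, ?_⟩
  rw [List.replicate_succ']; simp

/-- **Lemma.** Let `S ⊆ Q = {1,…,n}`, let `T` be a proper subset of `{1,…,n-c}`, and let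
`w ≠ ε` be a word of minimum length with `S·w = T`. Then:
(i) if `S = Q` then `w` starts with `b^{c+1}`;
(ii) if `S ⊆ {1,…,n-c}` and `n-c ∈ S` then `w` starts with `b^c a` or with `b^{c+1}`;
(iii) if `S ⊆ {1,…,n-c}` and `n-c ∉ S` then `w` starts with `a`. -/
theorem minimal_word_prefix (c n : ℕ) (hn : c + 2 ≤ n)
    (S T : Finset ℕ) (hS : S ⊆ Finset.Icc 1 n) (hT : T ⊂ Finset.Icc 1 (n - c))
    (w : List Bool) (hw : w ≠ [])
    (hmap : MapsOnto c n S T w)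
    (hmin : ∀ v : List Bool, MapsOnto c n S T v → w.length ≤ v.length) :
    (S = Finset.Icc 1 n → List.replicate (c + 1) true <+: w) ∧
    (S ⊆ Finset.Icc 1 (n - c) → (n - c) ∈ S →
      (List.replicate c true ++ [false]) <+: w ∨ List.replicate (c + 1) true <+: w) ∧
    (S ⊆ Finset.Icc 1 (n - c) → (n - c) ∉ S → [false] <+: w) := by
  refine ⟨?_, ?_, ?_⟩
  · rintro rfl
    obtain ⟨x, v, rfl⟩ := prefix_m' c n hn _ T hT.1 w hw (by simp; omega) hmap
    cases x with
    | true => exact prefix_true c v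
    | false =>
      exfalso
      rw [maps_append _ _ _ _ _ _ _ (maps_Q c n hn)] at hmap
      rw [show false :: v = [false] ++ v from rfl,
        maps_append _ _ _ _ _ _ _ (maps_X c n hn)] at hmap
      have hv : v ≠ [] := by
        rintro rfl
        rw [maps_nil] at hmap
        exact hT.ne hmap.symm
      obtain ⟨u, rfl⟩ := prefix_m c n hn _ T hT.1 v hv (by simp; omega) hmap
      rw [maps_append _ _ _ _ _ _ _ (maps_I c n hn)] at hmap
      have := hmin _ ((maps_append _ _ _ _ _ _ _ (maps_Q c n hn)).2 hmap)
      simp at this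
  · intro _ hm
    obtain ⟨x, v, rfl⟩ := prefix_m' c n hn _ T hT.1 w hw hm hmap
    cases x with
    | true => right; exact prefix_true c v
    | false => left; exact ⟨v, by simp⟩
  · intro hS' hm
    match w, hw, hmap, hmin with
    | false :: v, _, _, _ => exact ⟨v, rfl⟩
    | true :: v, _, hmap, hmin =>
      exfalso
      have hb : MapsOnto c n S S [true] := by
        have : ∀ q ∈ S, cernyRun c n q [true] = some q := by
          intro q hq
          have h1 := hS' hq
          rw [Finset.mem_Icc] at h1
          have h2 : q ≠ n - c := by rintro rfl; exact hm hq
          exact run_low c n q 1 (by omega)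
        exact ⟨fun q hq => ⟨q, hq, this q hq⟩, fun q hq => ⟨q, hq, this q hq⟩⟩
      have := hmin v ((maps_append c n S S T [true] v hb).1 hmap)
      simp at this
end

section
/- For every integer n ≥ 6, the reset threshold of C_n^1 is strictly greater than the reset threshold of C_n^0, i.e. r(C_n^1) > r(C_n^0). -/
/-- The reset threshold of `C_n^c`: minimal length of a synchronizing word. -/
noncomputable def resetThreshold (c n : ℕ) : ℕ :=
  sInf { L : ℕ | ∃ w : List Bool, w.length = L ∧ IsSync c n w }

namespace CernyAux

/-- rotation of the cycle of length m -/
def rot (m i : ℕ) : ℕ := if i = m then 1 else i + 1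
/-- the merging letter -/
def mrg (m i : ℕ) : ℕ := if i = m then 1 else i
/-- embedding -/
def emb (m i : ℕ) : ℕ := if i = m then m + 1 else i

def SyncS (m : ℕ) (S : Finset ℕ) (v : List Bool) : Prop :=
  ∃ qs, ∀ i ∈ S, cernyRun 1 (m + 1) (emb m i) v = some qs

lemma run_nil (c n q : ℕ) : cernyRun c n q [] = some q := rfl

lemma run_cons (c n q : ℕ) (l : Bool) (v : List Bool) :
    cernyRun c n q (l :: v) = (cernyStep c n q l).bind (fun p => cernyRun c n p v) := rfl

lemma run_append (c n q : ℕ) (u v : List Bool) :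
    cernyRun c n q (u ++ v) = (cernyRun c n q u).bind (fun p => cernyRun c n p v) := by
  simp [cernyRun, List.foldlM_append]

lemma step_b (m i : ℕ) (hm : 2 ≤ m) (h1 : 1 ≤ i) (h2 : i ≤ m) :
    cernyStep 1 (m + 1) (emb m i) true = some (emb m (mrg m i)) := by
  unfold cernyStep emb mrg
  grind

lemma step_a (m i : ℕ) (hm : 2 ≤ m) (h1 : 1 ≤ i) (h2 : i ≤ m) (h3 : i ≠ m - 1) :
    cernyStep 1 (m + 1) (emb m i) false = some (emb m (rot m i)) := by
  unfold cernyStep emb rot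
  grind

lemma run_ab (m i : ℕ) (v : List Bool) (hm : 2 ≤ m) (h1 : 1 ≤ i) (h2 : i ≤ m) :
    cernyRun 1 (m + 1) (emb m i) (false :: true :: v)
      = cernyRun 1 (m + 1) (emb m (rot m i)) v := by
  have : (cernyStep 1 (m + 1) (emb m i) false).bind (fun p => cernyStep 1 (m + 1) p true)
      = some (emb m (rot m i)) := by
    by_cases h : i = m - 1
    · have e1 : cernyStep 1 (m + 1) (emb m i) false = some m := by
        unfold cernyStep emb; grind
      rw [e1]
      simp only [Option.bind_some]
      unfold cernyStep emb rot; grind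
    · rw [step_a m i hm h1 h2 h]
      simp only [Option.bind_some]
      unfold cernyStep emb rot; grind
  rw [run_cons]
  simp only [run_cons]
  rw [← Option.bind_assoc, this]
  rfl

lemma emb_inj (m i j : ℕ) (h1 : i ≤ m) (h2 : j ≤ m) (h : emb m i = emb m j) : i = j := by
  unfold emb at h; grind

lemma emb_rot_ne (m i : ℕ) (hm : 2 ≤ m) (h2 : i ≤ m) (h : i ≠ m - 1) : emb m (rot m i) ≠ m := by
  unfold emb rot; grind

/-! ### abstract lower bound -/

theorem lower (m K : ℕ) (hm : 3 ≤ m) (Inv : Finset ℕ → ℕ → Prop)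
    (hr : ∀ S ⊆ Finset.Icc 1 m, 2 ≤ S.card → ∀ C, Inv S C →
      Inv (S.image (rot m)) (C + 1 + if m - 1 ∈ S then 1 else 0))
    (hb : ∀ S ⊆ Finset.Icc 1 m, 2 ≤ S.card → ∀ C, Inv S C → 2 ≤ (S.image (mrg m)).card →
      Inv (S.image (mrg m)) (C + 1))
    (hf : ∀ S ⊆ Finset.Icc 1 m, 2 ≤ S.card → ∀ C, Inv S C → (S.image (mrg m)).card < 2 →
      K ≤ C + 1) :
    ∀ (N : ℕ) (v : List Bool), v.length ≤ N → ∀ (S : Finset ℕ), S ⊆ Finset.Icc 1 m → 2 ≤ S.card →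
      ∀ C, Inv S C → SyncS m S v → K ≤ C + v.length := by
  intro N
  induction N with
  | zero =>
    intro v hv S hS hc C hI hs
    exfalso
    have : v = [] := List.length_eq_zero_iff.1 (by omega)
    subst this
    obtain ⟨qs, hq⟩ := hs
    obtain ⟨i, hi, j, hj, hij⟩ := Finset.one_lt_card.1 hc
    have h1 := hq i hi
    have h2 := hq j hj
    rw [run_nil] at h1 h2
    have hi' := Finset.mem_Icc.1 (hS hi)
    have hj' := Finset.mem_Icc.1 (hS hj)
    exact hij (emb_inj m i j hi'.2 hj'.2 (by simp_all))
  | succ N ih =>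
    intro v hv S hS hc C hI hs
    have hrS : S.image (rot m) ⊆ Finset.Icc 1 m := by
      intro x hx
      obtain ⟨i, hi, rfl⟩ := Finset.mem_image.1 hx
      have := Finset.mem_Icc.1 (hS hi)
      rw [Finset.mem_Icc]; unfold rot; grind
    have hbS : S.image (mrg m) ⊆ Finset.Icc 1 m := by
      intro x hx
      obtain ⟨i, hi, rfl⟩ := Finset.mem_image.1 hx
      have := Finset.mem_Icc.1 (hS hi)
      rw [Finset.mem_Icc]; unfold mrg; grind
    have hrc : (S.image (rot m)).card = S.card := by
      apply Finset.card_image_of_injOn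
      intro i hi j hj hij
      have := Finset.mem_Icc.1 (hS hi)
      have := Finset.mem_Icc.1 (hS hj)
      simp only [rot] at hij
      grind
    obtain ⟨qs, hq⟩ := hs
    match v, hv, hq with
    | [], hv, hq => exact ih [] (by simp) S hS hc C hI ⟨qs, hq⟩
    | true :: v, hv, hq =>
      by_cases h2 : 2 ≤ (S.image (mrg m)).card
      · have := ih v (by simpa using hv) _ hbS h2 (C + 1) (hb S hS hc C hI h2) ⟨qs, by
          intro x hx
          obtain ⟨i, hi, rfl⟩ := Finset.mem_image.1 hx
          have hi' := Finset.mem_Icc.1 (hS hi)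
          have := hq i hi
          rw [run_cons, step_b m i (by omega) hi'.1 hi'.2] at this
          exact this⟩
        simp only [List.length_cons]; omega
      · have := hf S hS hc C hI (by omega)
        simp only [List.length_cons]; omega
    | false :: v, hv, hq =>
      have hI' := hr S hS hc C hI
      by_cases hmem : m - 1 ∈ S
      · rw [if_pos hmem] at hI'
        have e1 : cernyStep 1 (m + 1) (emb m (m - 1)) false = some m := by
          unfold cernyStep emb; grind
        match v, hv, hq with
        | [], hv, hq =>
          exfalso
          have key : ∀ i ∈ S, i = m - 1 := by
            intro i hi
            by_contra hne
            have hi' := Finset.mem_Icc.1 (hS hi)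
            have h1 := hq i hi
            have h2 := hq _ hmem
            rw [run_cons, step_a m i (by omega) hi'.1 hi'.2 hne] at h1
            rw [run_cons, e1] at h2
            simp only [Option.bind_some, run_nil, Option.some.injEq] at h1 h2
            exact emb_rot_ne m i (by omega) hi'.2 hne (h1.trans h2.symm)
          obtain ⟨i, hi, j, hj, hij⟩ := Finset.one_lt_card.1 hc
          exact hij ((key i hi).trans (key j hj).symm)
        | false :: v, hv, hq =>
          exfalso
          have h2 := hq _ hmem
          rw [run_cons, e1] at h2
          simp only [Option.bind_some] at h2
          have e2 : cernyStep 1 (m + 1) m false = none := by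
            unfold cernyStep; grind
          rw [run_cons, e2] at h2
          simp at h2
        | true :: v, hv, hq =>
          simp only [List.length_cons] at hv
          have := ih v (by omega) _ hrS (by omega) _ hI' ⟨qs, by
            intro x hx
            obtain ⟨i, hi, rfl⟩ := Finset.mem_image.1 hx
            have hi' := Finset.mem_Icc.1 (hS hi)
            rw [← run_ab m i v (by omega) hi'.1 hi'.2]
            exact hq i hi⟩
          simp only [List.length_cons]; omega
      · rw [if_neg hmem] at hI'
        have := ih v (by simpa using hv) _ hrS (by omega) _ hI' ⟨qs, by
          intro x hx
          obtain ⟨i, hi, rfl⟩ := Finset.mem_image.1 hx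
          have hi' := Finset.mem_Icc.1 (hS hi)
          have := hq i hi
          rw [run_cons, step_a m i (by omega) hi'.1 hi'.2 (by rintro rfl; exact hmem hi)] at this
          exact this⟩
        simp only [List.length_cons]; omega

/-- from a bound for the cycle to a bound for sync words -/
theorem lower_full (m K : ℕ) (hm : 3 ≤ m)
    (h : ∀ v, SyncS m (Finset.Icc 1 m) v → K ≤ v.length) (w : List Bool)
    (hw : IsSync 1 (m + 1) w) : K + 1 ≤ w.length := by
  obtain ⟨qs, hq⟩ := hw
  match w, hq with
  | [], hq =>
    have h1 := hq 1 (by rw [Finset.mem_Icc]; omega)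
    have h2 := hq 2 (by rw [Finset.mem_Icc]; omega)
    rw [run_nil] at h1 h2
    have := Option.some.inj (h1.trans h2.symm)
    omega
  | false :: v, hq =>
    have h1 := hq m (by rw [Finset.mem_Icc]; omega)
    have e2 : cernyStep 1 (m + 1) m false = none := by
      unfold cernyStep; grind
    rw [run_cons, e2] at h1
    simp at h1
  | true :: v, hq =>
    have := h v ⟨qs, by
      intro i hi
      have hi' := Finset.mem_Icc.1 hi
      have h1 := hq i (by rw [Finset.mem_Icc]; omega)
      have e : cernyStep 1 (m + 1) i true = some (emb m i) := by
        unfold cernyStep emb; grind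
      rw [run_cons, e] at h1
      exact h1⟩
    simp only [List.length_cons]; omega

/-! ### m = 5 -/

def tab : List ℕ := [0, 0, 0, 7, 0, 14, 6, 15, 0, 10, 13, 18, 5, 19, 14, 24, 0, 1, 8, 8, 11, 15, 16, 16, 3, 10, 17, 18, 12, 20, 22, 25]

def T (S : Finset ℕ) : ℕ := tab.getD (∑ i ∈ S, 2 ^ (i - 1)) 0

lemma tab_ok : ∀ S ∈ (Finset.Icc 1 5).powerset, 2 ≤ S.card →
    (T S ≤ T (S.image (rot 5)) + 1 + (if 5 - 1 ∈ S then 1 else 0)) ∧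
    (T S ≤ T (S.image (mrg 5)) + 1) ∧ ((S.image (mrg 5)).card < 2 → T S ≤ 1) := by
  decide +kernel

lemma T_full : T (Finset.Icc 1 5) = 25 := by decide +kernel

theorem lower5 (v : List Bool) (hv : SyncS 5 (Finset.Icc 1 5) v) : 25 ≤ v.length := by
  have := lower 5 25 (by norm_num) (fun S C => 25 ≤ C + T S)
    (fun S hS hc C h => by
      have := (tab_ok S (Finset.mem_powerset.2 hS) hc).1
      omega)
    (fun S hS hc C h _ => by
      have := (tab_ok S (Finset.mem_powerset.2 hS) hc).2.1
      omega)
    (fun S hS hc C h h2 => by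
      have := (tab_ok S (Finset.mem_powerset.2 hS) hc).2.2 h2
      omega) v.length v le_rfl (Finset.Icc 1 5) (Finset.Subset.refl _) (by simp) 0
      (by simp [T_full]) hv
  omega

/-! ### general m -/

def pos (m e j : ℕ) : ℕ := if j < e then e - j else e + m - j

def cnt (m e : ℕ) (S : Finset ℕ) : ℕ := (S.filter (fun i => (e = m ∨ e < i) ∧ i < m)).card

def dd (m e : ℕ) : ℕ := if e = m then m - 1 else m - 1 - e

def GInv (m : ℕ) (S : Finset ℕ) (C : ℕ) : Prop :=
  2 * m ≤ C + 2 * S.card + 1 ∧ (m ∈ S → 2 * m ≤ C + 2 * S.card) ∧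
  ∀ g j e, 1 ≤ g → g + j + 2 = m → 1 ≤ e → e ≤ m → (∀ t < g, pos m e t ∉ S) →
    m * m + m ≤ C + S.card + (j * (m + 1) + dd m e + cnt m e S) + 5

lemma GInv_rot (m : ℕ) (hm : 3 ≤ m) (S : Finset ℕ) (hS : S ⊆ Finset.Icc 1 m) (C : ℕ)
    (h : GInv m S C) : GInv m (S.image (rot m)) (C + 1 + if m - 1 ∈ S then 1 else 0) := by
  have inj : Set.InjOn (rot m) S := by
    intro i hi k hk hik
    have := Finset.mem_Icc.1 (hS hi)
    have := Finset.mem_Icc.1 (hS hk)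
    simp only [rot] at hik
    grind
  have hrc : (S.image (rot m)).card = S.card := Finset.card_image_of_injOn inj
  obtain ⟨h1, h2, h3⟩ := h
  refine ⟨by rw [hrc]; omega, fun _ => by rw [hrc]; omega, ?_⟩
  intro g j e hg hj he1 he2 hempty
  rw [hrc]
  -- previous end of the arc
  obtain ⟨e0, he0⟩ : ∃ e0, e0 = if e = 1 then m else e - 1 := ⟨_, rfl⟩
  have hprev := h3 g j e0 hg hj (by grind) (by grind) (by
    intro t ht hmem
    apply hempty t ht
    refine Finset.mem_image.2 ⟨_, hmem, ?_⟩
    unfold rot pos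
    grind)
  have hcnt : cnt m e0 S + dd m e0 ≤ cnt m e (S.image (rot m)) + dd m e + 1
      + (if m - 1 ∈ S then 1 else 0) := by
    by_cases hem : e = m
    · have : cnt m e0 S ≤ if m - 1 ∈ S then 1 else 0 := by
        unfold cnt
        have hsub : S.filter (fun i => (e0 = m ∨ e0 < i) ∧ i < m) = ∅ := by
          apply Finset.filter_eq_empty_iff.2
          intro i hi
          grind
        rw [hsub]; simp
      have : dd m e0 = 0 := by unfold dd; grind
      omega
    · have hd : dd m e0 = dd m e + 1 := by unfold dd; grind
      have hc : cnt m e0 S ≤ cnt m e (S.image (rot m)) + (if m - 1 ∈ S then 1 else 0) := by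
        unfold cnt
        have hsub : (S.filter (fun i => (e0 = m ∨ e0 < i) ∧ i < m - 1)).card
            ≤ ((S.image (rot m)).filter (fun i => (e = m ∨ e < i) ∧ i < m)).card := by
          apply Finset.card_le_card_of_injOn (rot m)
          · intro i hi
            simp only [Finset.coe_filter, Set.mem_ofPred_eq, Finset.mem_filter,
              Finset.mem_image] at hi ⊢
            refine ⟨⟨i, hi.1, rfl⟩, ?_⟩
            have := Finset.mem_Icc.1 (hS hi.1)
            unfold rot
            grind
          · exact inj.mono (by intro i hi; simp at hi; exact hi.1)
        have hsub2 : S.filter (fun i => (e0 = m ∨ e0 < i) ∧ i < m) ⊆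
            S.filter (fun i => (e0 = m ∨ e0 < i) ∧ i < m - 1) ∪ S.filter (fun i => i = m - 1) := by
          intro i hi
          simp only [Finset.mem_filter, Finset.mem_union] at hi ⊢
          grind
        have hc2 := (Finset.card_le_card hsub2).trans (Finset.card_union_le _ _)
        have hc3 : (S.filter (fun i => i = m - 1)).card = if m - 1 ∈ S then 1 else 0 := by
          rw [Finset.filter_eq']
          split_ifs <;> simp
        omega
      omega
  omega

lemma mrg_image_of_not_mem (m : ℕ) (S : Finset ℕ) (h : m ∉ S) : S.image (mrg m) = S := by
  ext x
  simp only [Finset.mem_image, mrg]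
  grind

lemma mrg_image_of_mem (m : ℕ) (S : Finset ℕ) (h : m ∈ S) :
    S.image (mrg m) = insert 1 (S.erase m) := by
  ext x
  simp only [Finset.mem_image, mrg, Finset.mem_insert, Finset.mem_erase]
  grind

lemma GInv_mrg (m : ℕ) (hm : 3 ≤ m) (S : Finset ℕ) (hS : S ⊆ Finset.Icc 1 m) (C : ℕ)
    (h : GInv m S C) (hc : 2 ≤ (S.image (mrg m)).card) : GInv m (S.image (mrg m)) (C + 1) := by
  by_cases hmS : m ∈ S
  swap
  · rw [mrg_image_of_not_mem m S hmS]
    obtain ⟨h1, h2, h3⟩ := h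
    refine ⟨by omega, fun h => by have := h2 h; omega, ?_⟩
    intro g j e a1 a2 a3 a4 a5
    have := h3 g j e a1 a2 a3 a4 a5
    omega
  rw [mrg_image_of_mem m S hmS] at hc ⊢
  obtain ⟨h1, h2, h3⟩ := h
  have h2 := h2 hmS
  have hcard1 : S.card ≤ (insert 1 (S.erase m)).card + 1 := by
    have := Finset.card_le_card (Finset.subset_insert 1 (S.erase m))
    rw [Finset.card_erase_of_mem hmS] at this
    omega
  obtain ⟨S', hS'⟩ : ∃ S', S' = insert 1 (S.erase m) := ⟨_, rfl⟩
  rw [← hS'] at hc hcard1 ⊢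
  have hm' : m ∉ S' := by rw [hS']; simp; omega
  have h1' : 1 ∈ S' := by rw [hS']; simp
  have hmem : ∀ x, x ≠ m → x ∈ S → x ∈ S' := by
    intro x h1 h2; rw [hS']; simp [h1, h2]
  have hmem2 : ∀ x, x ≠ 1 → x ∈ S' → x ∈ S := by
    intro x h1 h2; rw [hS'] at h2; simp [h1] at h2; exact h2.2
  refine ⟨by omega, fun h => absurd h hm', ?_⟩
  intro g j e hg hj he1 he2 hempty
  have hS'm : ∀ x ∈ S', x < m := by
    intro x hx
    by_cases hx1 : x = 1
    · omega
    · have := Finset.mem_Icc.1 (hS (hmem2 x hx1 hx))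
      have : x ≠ m := by rintro rfl; exact hm' hx
      omega
  by_cases hem : e = m
  · subst hem
    have hcnt : cnt e e S' = S'.card := by
      unfold cnt
      congr 1
      apply Finset.filter_true_of_mem
      intro x hx
      exact ⟨Or.inl rfl, hS'm x hx⟩
    have hdd : dd e e = e - 1 := by simp [dd]
    rw [hcnt, hdd]
    by_cases hg1 : g = 1
    · subst hg1
      obtain rfl : e = j + 3 := by omega
      have : j + 3 - 1 = j + 2 := by omega
      rw [this]
      nlinarith
    · have hprev := h3 (g - 1) (j + 1) (e - 1) (by omega) (by omega) (by omega) (by omega) (by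
        intro t ht hx
        have := hempty (t + 1) (by omega)
        apply this
        have hp : pos e (e - 1) t = pos e e (t + 1) := by unfold pos; grind
        rw [← hp]
        apply hmem _ _ hx
        unfold pos; grind)
      have hc0 : cnt e (e - 1) S = 0 := by
        unfold cnt
        rw [Finset.card_eq_zero]
        apply Finset.filter_eq_empty_iff.2
        intro i hi
        omega
      have hd0 : dd e (e - 1) = 0 := by unfold dd; grind
      rw [hc0, hd0] at hprev
      have : (j + 1) * (e + 1) = j * (e + 1) + e + 1 := by ring
      rw [this] at hprev
      omega
  · have he1' : e ≠ 1 := by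
      rintro rfl
      have := hempty 0 (by omega)
      simp [pos] at this
      exact this h1'
    have hge : g < e := by
      by_contra hcon
      have := hempty (e - 1) (by omega)
      apply this
      have : pos m e (e - 1) = 1 := by unfold pos; grind
      rw [this]; exact h1'
    have hprev := h3 g j e hg hj he1 he2 (by
      intro t ht hx
      apply hempty t ht
      apply hmem _ _ hx
      unfold pos; grind)
    have hcnt : cnt m e S = cnt m e S' := by
      unfold cnt
      congr 1
      ext i
      simp only [Finset.mem_filter]
      constructor
      · rintro ⟨a, b, c⟩; exact ⟨hmem i (by omega) a, b, c⟩
      · rintro ⟨a, b, c⟩; exact ⟨hmem2 i (by omega) a, b, c⟩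
    rw [hcnt] at hprev
    omega

lemma GInv_fin (m : ℕ) (hm : 3 ≤ m) (S : Finset ℕ) (hS : S ⊆ Finset.Icc 1 m) (hc : 2 ≤ S.card)
    (C : ℕ) (h : GInv m S C) (hc2 : (S.image (mrg m)).card < 2) : m * m + m ≤ C + 1 + 6 := by
  have hmS : m ∈ S := by
    by_contra hmS
    rw [mrg_image_of_not_mem m S hmS] at hc2
    omega
  rw [mrg_image_of_mem m S hmS] at hc2
  have honly : ∀ x ∈ S, x = m ∨ x = 1 := by
    intro x hx
    by_contra hcon
    push Not at hcon
    have : 1 < (insert 1 (S.erase m)).card :=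
      Finset.one_lt_card.2 ⟨1, by simp, x, by simp [hcon, hx], fun h => hcon.2 h.symm⟩
    omega
  have hcard : S.card ≤ 2 := by
    have : S ⊆ {m, 1} := by
      intro x hx
      simpa using honly x hx
    exact (Finset.card_le_card this).trans Finset.card_le_two
  have := h.2.2 (m - 2) 0 (m - 1) (by omega) (by omega) (by omega) (by omega) (by
    intro t ht hx
    have := honly _ hx
    unfold pos at this
    grind)
  have hc0 : cnt m (m - 1) S = 0 := by
    unfold cnt
    rw [Finset.card_eq_zero]
    apply Finset.filter_eq_empty_iff.2
    intro i hi
    omega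
  have hd0 : dd m (m - 1) = 0 := by unfold dd; grind
  rw [hc0, hd0] at this
  omega

theorem lowerG (m : ℕ) (hm : 6 ≤ m) (v : List Bool) (hv : SyncS m (Finset.Icc 1 m) v) :
    m * m ≤ v.length := by
  have := lower m (m * m + m - 6) (by omega) (GInv m)
    (fun S hS _ C h => GInv_rot m (by omega) S hS C h)
    (fun S hS _ C h h2 => GInv_mrg m (by omega) S hS C h h2)
    (fun S hS hc C h h2 => by
      have := GInv_fin m (by omega) S hS hc C h h2
      omega) v.length v le_rfl (Finset.Icc 1 m) (Finset.Subset.refl _) (by simp; omega) 0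
      (by
        refine ⟨by rw [Nat.card_Icc]; omega, fun _ => by simp, ?_⟩
        intro g j e hg hj he1 he2 hempty
        exfalso
        apply hempty 0 (by omega)
        simp [pos]
        grind) hv
  omega

/-! ### upper bounds -/

lemma run0_a (m k : ℕ) : ∀ q, q + k ≤ m → cernyRun 0 m q (List.replicate k false) = some (q + k) := by
  induction k with
  | zero => intro q _; rfl
  | succ k ih =>
    intro q hq
    rw [List.replicate_succ, run_cons]
    have : cernyStep 0 m q false = some (q + 1) := by unfold cernyStep; grind
    rw [this, Option.bind_some, ih (q + 1) (by omega)]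
    congr 1; omega

def blk (m : ℕ) : List Bool := List.replicate (m - 1) false ++ [true]

lemma run0_blk (m q : ℕ) (hm : 2 ≤ m) (h1 : 1 ≤ q) (h2 : q ≤ m) :
    cernyRun 0 m q (blk m) = some (max 1 (q - 1)) := by
  unfold blk
  rw [run_append]
  by_cases hq : q = 1
  · subst hq
    rw [run0_a m (m - 1) 1 (by omega), Option.bind_some, run_cons]
    have : cernyStep 0 m (1 + (m - 1)) true = some 1 := by unfold cernyStep; grind
    rw [this]; rfl
  · have e : List.replicate (m - 1) false
        = List.replicate (m - q) false ++ (false :: List.replicate (q - 2) false) := by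
      rw [← List.replicate_succ, List.replicate_append_replicate]
      congr 1; omega
    rw [e, run_append, run0_a m (m - q) q (by omega), Option.bind_some, run_cons]
    have : cernyStep 0 m (q + (m - q)) false = some 1 := by unfold cernyStep; grind
    rw [this, Option.bind_some, run0_a m (q - 2) 1 (by omega), Option.bind_some, run_cons]
    have : cernyStep 0 m (1 + (q - 2)) true = some (max 1 (q - 1)) := by unfold cernyStep; grind
    rw [this]; rfl

def blks (m : ℕ) : ℕ → List Bool
  | 0 => []
  | k + 1 => blk m ++ blks m k

lemma run0_blks (m k : ℕ) (hm : 2 ≤ m) : ∀ q, 1 ≤ q → q ≤ m →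
    cernyRun 0 m q (blks m k) = some (max 1 (q - k)) := by
  induction k with
  | zero => intro q h1 h2; simp only [blks, run_nil]; congr 1; omega
  | succ k ih =>
    intro q h1 h2
    simp only [blks]
    rw [run_append, run0_blk m q hm h1 h2, Option.bind_some, ih _ (by omega) (by omega)]
    congr 1; omega

lemma blks_length (m k : ℕ) (hm : 1 ≤ m) : (blks m k).length = k * m := by
  induction k with
  | zero => simp [blks]
  | succ k ih =>
    simp only [blks, ih, blk, List.length_append, List.length_replicate, List.length_cons,
      List.length_nil, Nat.add_mul]
    omega

lemma run0_word (m q : ℕ) (hm : 2 ≤ m) (h1 : 1 ≤ q) (h2 : q ≤ m) :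
    cernyRun 0 m q (true :: blks m (m - 2)) = some 1 := by
  rw [run_cons]
  have : cernyStep 0 m q true = some (mrg m q) := by unfold cernyStep mrg; grind
  rw [this, Option.bind_some, run0_blks m _ hm _ (by unfold mrg; grind) (by unfold mrg; grind)]
  unfold mrg; congr 1; grind

def tr : List Bool → List Bool
  | [] => []
  | true :: v => true :: tr v
  | false :: v => false :: true :: tr v

lemma run_tr (m : ℕ) (hm : 2 ≤ m) (w : List Bool) : ∀ q, 1 ≤ q → q ≤ m →
    cernyRun 1 (m + 1) (emb m q) (tr w) = (cernyRun 0 m q w).map (emb m) := by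
  induction w with
  | nil => intro q _ _; rfl
  | cons l w ih =>
    intro q h1 h2
    cases l with
    | true =>
      have : cernyStep 0 m q true = some (mrg m q) := by unfold cernyStep mrg; grind
      simp only [tr]
      rw [run_cons, run_cons, step_b m q hm h1 h2, this, Option.bind_some, Option.bind_some]
      exact ih _ (by unfold mrg; grind) (by unfold mrg; grind)
    | false =>
      have : cernyStep 0 m q false = some (rot m q) := by unfold cernyStep rot; grind
      simp only [tr]
      rw [run_ab m q _ hm h1 h2, run_cons, this, Option.bind_some]
      exact ih _ (by unfold rot; grind) (by unfold rot; grind)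

lemma exists_sync1 (m : ℕ) (hm : 2 ≤ m) : ∃ w, IsSync 1 (m + 1) w := by
  refine ⟨true :: tr (true :: blks m (m - 2)), emb m 1, ?_⟩
  intro q hq
  have hq := Finset.mem_Icc.1 hq
  obtain ⟨i, hi⟩ : ∃ i, i = if q = m + 1 then 1 else q := ⟨_, rfl⟩
  have e : cernyStep 1 (m + 1) q true = some (emb m i) := by
    unfold cernyStep emb; grind
  rw [run_cons, e, Option.bind_some, run_tr m hm _ i (by grind) (by grind),
    run0_word m i hm (by grind) (by grind)]
  rfl

end CernyAux

open CernyAux in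
/-- **Corollary.** For every `n ≥ 6`, `r(C_n^1) > r(C_n^0)`. -/
theorem resetThreshold_one_gt_zero (n : ℕ) (hn : 6 ≤ n) :
    resetThreshold 1 n > resetThreshold 0 n := by
  obtain ⟨m, rfl⟩ : ∃ m, n = m + 1 := ⟨n - 1, by omega⟩
  have hup : resetThreshold 0 (m + 1) ≤ m * m := by
    apply Nat.sInf_le
    refine ⟨true :: blks (m + 1) (m + 1 - 2), ?_, 1, ?_⟩
    · rw [List.length_cons, blks_length _ _ (by omega)]
      obtain ⟨k, rfl⟩ : ∃ k, m = k + 1 := ⟨m - 1, by omega⟩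
      have : k + 1 + 1 - 2 = k := by omega
      rw [this]; ring
    · intro q hq
      have := Finset.mem_Icc.1 hq
      exact run0_word (m + 1) q (by omega) this.1 this.2
  have hne : { L : ℕ | ∃ w : List Bool, w.length = L ∧ IsSync 1 (m + 1) w }.Nonempty := by
    obtain ⟨w, hw⟩ := exists_sync1 m (by omega)
    exact ⟨w.length, w, rfl, hw⟩
  obtain ⟨w, hwl, hw⟩ := Nat.sInf_mem hne
  have hlow : m * m + 1 ≤ w.length := by
    by_cases h5 : m = 5
    · subst h5
      exact lower_full 5 25 (by omega) lower5 w hw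
    · exact lower_full m (m * m) (by omega) (lowerG m (by omega)) w hw
  unfold resetThreshold at hup ⊢
  omega
end

section
/- For every integer c ≥ 1 and every integer n ≥ 1, n·ln(n)/ln(φ_c) − 3cn < f_c(n) < n·ln(n)/ln(φ_c) + (c+1)n. -/
/-- The solution `f_c` of the pawn race problem:
`f_c(1) = 0` and `f_c(n) = min { f_c(i) + f_c(n-i) + (c+1)·n - i | 1 ≤ i ≤ n-1 }` for `n ≥ 2`. -/
def fc (c : ℕ) : ℕ → ℕ
  | 0 => 0
  | 1 => 0
  | n + 2 =>
      (Finset.Icc 1 (n + 1)).attach.inf'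
        (Finset.attach_nonempty_iff.mpr ⟨1, by simp⟩)
        (fun i => fc c i.1 + fc c (n + 2 - i.1) + (c + 1) * (n + 2) - i.1)
termination_by n => n
decreasing_by
  all_goals
    have h := i.2
    simp only [Finset.mem_Icc] at h
    omega

theorem fc_exists (c n : ℕ) (hn : 2 ≤ n) :
    ∃ i j, 1 ≤ i ∧ 1 ≤ j ∧ i + j = n ∧ fc c n = fc c i + fc c j + c * i + (c + 1) * j := by
  obtain ⟨m, rfl⟩ : ∃ m, n = m + 2 := ⟨n - 2, by omega⟩
  rw [fc]
  obtain ⟨i, -, hi⟩ := Finset.exists_mem_eq_inf' (s := (Finset.Icc 1 (m + 1)).attach)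
    (Finset.attach_nonempty_iff.mpr ⟨1, by simp⟩)
    (fun i => fc c i.1 + fc c (m + 2 - i.1) + (c + 1) * (m + 2) - i.1)
  have h := i.2
  simp only [Finset.mem_Icc] at h
  refine ⟨i.1, m + 2 - i.1, h.1, by omega, by omega, ?_⟩
  rw [hi]
  obtain ⟨j, hj⟩ : ∃ j, m + 2 = i.1 + j := ⟨m + 2 - i.1, by omega⟩
  rw [hj, Nat.add_sub_cancel_left]
  have : (c + 1) * (i.1 + j) = c * i.1 + (c + 1) * j + i.1 := by ring
  omega

theorem fc_le (c i j : ℕ) (hi : 1 ≤ i) (hj : 1 ≤ j) :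
    fc c (i + j) ≤ fc c i + fc c j + c * i + (c + 1) * j := by
  obtain ⟨m, hm⟩ : ∃ m, i + j = m + 2 := ⟨i + j - 2, by omega⟩
  rw [hm, fc]
  have hmem : i ∈ Finset.Icc 1 (m + 1) := by simp only [Finset.mem_Icc]; omega
  refine (Finset.inf'_le (s := (Finset.Icc 1 (m + 1)).attach)
    (fun i => fc c i.1 + fc c (m + 2 - i.1) + (c + 1) * (m + 2) - i.1)
    (Finset.mem_attach _ ⟨i, hmem⟩)).trans ?_
  simp only
  rw [← hm, Nat.add_sub_cancel_left]
  have : (c + 1) * (i + j) = c * i + (c + 1) * j + i := by ring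
  omega

theorem fc_one (c : ℕ) : fc c 1 = 0 := by rw [fc]

/-- Number of leaves of the balanced tree (shifted by `c + 1`), with `c = d + 1`. -/
def leafA (d : ℕ) (k : ℕ) : ℕ :=
  if k ≤ d + 2 then 1 else leafA d (k - (d + 1)) + leafA d (k - (d + 2))
termination_by k
decreasing_by all_goals omega

theorem leafA_small (d k : ℕ) (h : k ≤ d + 2) : leafA d k = 1 := by
  rw [leafA, if_pos h]

theorem leafA_big (d k : ℕ) (h : d + 2 < k) :
    leafA d k = leafA d (k - (d + 1)) + leafA d (k - (d + 2)) := by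
  rw [leafA, if_neg (by omega)]

theorem leafA_pos (d k : ℕ) : 1 ≤ leafA d k := by
  induction k using Nat.strong_induction_on with
  | _ k ih =>
    by_cases h : k ≤ d + 2
    · rw [leafA_small d k h]
    · rw [leafA_big d k (by omega)]
      have := ih (k - (d + 1)) (by omega)
      omega

theorem leafA_mono (d k : ℕ) : leafA d k ≤ leafA d (k + 1) := by
  induction k using Nat.strong_induction_on with
  | _ k ih =>
    by_cases h : k ≤ d + 2
    · rw [leafA_small d k h]; exact leafA_pos _ _
    · rw [leafA_big d k (by omega), leafA_big d (k + 1) (by omega)]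
      have h1 := ih (k - (d + 1)) (by omega)
      have h2 := ih (k - (d + 2)) (by omega)
      have e1 : k - (d + 1) + 1 = k + 1 - (d + 1) := by omega
      have e2 : k - (d + 2) + 1 = k + 1 - (d + 2) := by omega
      rw [e1] at h1
      rw [e2] at h2
      omega

theorem fc_upper (d k : ℕ) : ∀ n, leafA d k ≤ n → n ≤ leafA d (k + 1) →
    fc (d + 1) n ≤ k * n ∧ (n < leafA d (k + 1) → fc (d + 1) n < k * n) := by
  induction k using Nat.strong_induction_on with
  | _ k ih =>
    intro n h1 h2
    by_cases h : k ≤ d + 1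
    · rw [leafA_small d k (by omega)] at h1
      rw [leafA_small d (k + 1) (by omega)] at h2 ⊢
      obtain rfl : n = 1 := by omega
      rw [fc_one]
      simp
    by_cases h' : k = d + 2
    · subst h'
      have e : leafA d (d + 2 + 1) = 2 := by
        rw [leafA_big d _ (by omega), leafA_small _ _ (by omega), leafA_small _ _ (by omega)]
      rw [leafA_small d _ (by omega)] at h1
      rw [e] at h2 ⊢
      have h2' : fc (d + 1) 2 ≤ (d + 1) + (d + 2) := by
        have := fc_le (d + 1) 1 1 le_rfl le_rfl
        rw [fc_one] at this
        norm_num at this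
        omega
      rcases (by omega : n = 1 ∨ n = 2) with rfl | rfl
      · rw [fc_one]; simp
      · constructor
        · omega
        · omega
    · obtain ⟨m, rfl⟩ : ∃ m, k = m + (d + 2) := ⟨k - (d + 2), by omega⟩
      rw [leafA_big d _ (by omega)] at h1
      rw [leafA_big d _ (by omega)] at h2 ⊢
      have e1 : m + (d + 2) - (d + 1) = m + 1 := by omega
      have e2 : m + (d + 2) - (d + 2) = m := by omega
      have e3 : m + (d + 2) + 1 - (d + 1) = m + 1 + 1 := by omega
      have e4 : m + (d + 2) + 1 - (d + 2) = m + 1 := by omega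
      rw [e1, e2] at h1
      rw [e3, e4] at h2 ⊢
      have m1 := leafA_mono d m
      have m2 := leafA_mono d (m + 1)
      have p1 := leafA_pos d m
      obtain ⟨i, j, hij, a1, a2, a3, a4⟩ : ∃ i j, i + j = n ∧ leafA d (m + 1) ≤ i ∧
          i ≤ leafA d (m + 1 + 1) ∧ leafA d m ≤ j ∧ j ≤ leafA d (m + 1) := by
        by_cases hh : n ≤ leafA d (m + 1) + leafA d (m + 1)
        · exact ⟨leafA d (m + 1), n - leafA d (m + 1), by omega, by omega, by omega, by omega,
            by omega⟩
        · exact ⟨n - leafA d (m + 1), leafA d (m + 1), by omega, by omega, by omega, by omega,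
            by omega⟩
      obtain ⟨u1, u2⟩ := ih (m + 1) (by omega) i a1 a2
      obtain ⟨v1, v2⟩ := ih m (by omega) j a3 a4
      have key := fc_le (d + 1) i j (by omega) (by omega)
      subst hij
      have hring : (m + (d + 2)) * (i + j) =
          (m + 1) * i + m * j + (d + 1) * i + (d + 1 + 1) * j := by ring
      rw [hring]
      refine ⟨by omega, fun hlt => ?_⟩
      rcases (by omega : i < leafA d (m + 1 + 1) ∨ j < leafA d (m + 1)) with hx | hx
      · have := u2 hx; omega
      · have := v2 hx; omega

theorem leafA_ge (d k : ℕ) (φ : ℝ) (hφ1 : 1 < φ) (hφ : φ ^ (d + 2) = φ + 1) :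
    φ ^ k ≤ leafA d k * φ ^ (d + 2) := by
  induction k using Nat.strong_induction_on with
  | _ k ih =>
    by_cases h : k ≤ d + 2
    · rw [leafA_small d k h]
      simpa using pow_le_pow_right₀ hφ1.le h
    · obtain ⟨m, rfl⟩ : ∃ m, k = m + (d + 2) := ⟨k - (d + 2), by omega⟩
      rw [leafA_big d _ (by omega)]
      have e1 : m + (d + 2) - (d + 1) = m + 1 := by omega
      have e2 : m + (d + 2) - (d + 2) = m := by omega
      rw [e1, e2]
      have h1 := ih (m + 1) (by omega)
      have h2 := ih m (by omega)
      have : φ ^ (m + (d + 2)) = φ ^ (m + 1) + φ ^ m := by rw [pow_add, hφ]; ring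
      rw [this]
      push_cast
      linarith

theorem fc_lower (c : ℕ) (φ : ℝ) (hφ1 : 1 < φ) (hφ : φ ^ (c + 1) = φ + 1) (n : ℕ) (hn : 1 ≤ n) :
    (n : ℝ) * Real.log n ≤ fc c n * Real.log φ := by
  induction n using Nat.strong_induction_on with
  | _ n ih =>
    by_cases h : n = 1
    · subst h; simp [fc_one]
    obtain ⟨i, j, hi, hj, hij, hf⟩ := fc_exists c n (by omega)
    have h1 := ih i (by omega) hi
    have h2 := ih j (by omega) hj
    rw [hf]
    have hi0 : (0 : ℝ) < i := by exact_mod_cast hi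
    have hj0 : (0 : ℝ) < j := by exact_mod_cast hj
    have hn0 : (0 : ℝ) < n := by exact_mod_cast hn
    have hφ0 : 0 < φ := by linarith
    have hij' : (n : ℝ) = i + j := by rw [← hij]; push_cast; ring
    have g : ∀ (x : ℝ) (t : ℕ), 0 < x →
        x * (Real.log n - t * Real.log φ - Real.log x) ≤ n / φ ^ t - x := by
      intro x t hx
      have hp : 0 < φ ^ t := by positivity
      have := Real.log_le_sub_one_of_pos (x := n / φ ^ t / x) (by positivity)
      rw [Real.log_div (by positivity) hx.ne', Real.log_div hn0.ne' hp.ne', Real.log_pow] at this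
      calc _ ≤ x * (n / φ ^ t / x - 1) := mul_le_mul_of_nonneg_left this hx.le
        _ = _ := by field_simp
    have g1 := g i c hi0
    have g2 := g j (c + 1) hj0
    have hs : (n : ℝ) / φ ^ c + n / φ ^ (c + 1) = n := by
      have : φ ^ (c + 1) = φ ^ c * φ := pow_succ _ _
      have hp : 0 < φ ^ c := by positivity
      have e : (n : ℝ) / φ ^ c = n * φ / φ ^ (c + 1) := by rw [this]; field_simp
      rw [e, ← add_div, hφ]
      field_simp
    have hexp : (n : ℝ) * Real.log n = i * Real.log n + j * Real.log n := by
      nth_rewrite 1 [hij']; ring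
    rw [hexp]
    push_cast at g2 ⊢
    nlinarith

theorem fc_phi_bounds (c n : ℕ) (hc : 1 ≤ c) (hn : 1 ≤ n)
    (φ : ℝ) (hφ1 : 1 < φ) (hφ : φ ^ (c + 1) - φ - 1 = 0) :
    (n : ℝ) * Real.log (n : ℝ) / Real.log φ - 3 * (c : ℝ) * (n : ℝ) < (fc c n : ℝ) ∧
    (fc c n : ℝ) < (n : ℝ) * Real.log (n : ℝ) / Real.log φ + ((c : ℝ) + 1) * (n : ℝ) := by
  have hφ' : φ ^ (c + 1) = φ + 1 := by linarith
  have hl : 0 < Real.log φ := Real.log_pos hφ1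
  have hn0 : (0 : ℝ) < n := by exact_mod_cast hn
  have hc0 : (0 : ℝ) < c := by exact_mod_cast hc
  constructor
  · have h1 := fc_lower c φ hφ1 hφ' n hn
    have h2 := (div_le_iff₀ hl).2 h1
    have : 0 < 3 * (c : ℝ) * n := by positivity
    linarith
  · obtain ⟨d, rfl⟩ : ∃ d, c = d + 1 := ⟨c - 1, by omega⟩
    have hex : ∃ k, n < leafA d (k + 1) := by
      obtain ⟨k, hk⟩ := pow_unbounded_of_one_lt (n * φ ^ (d + 2)) hφ1
      refine ⟨k, ?_⟩
      have h1 := leafA_ge d k φ hφ1 hφ'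
      have h2 := leafA_mono d k
      have hp : 0 < φ ^ (d + 2) := by positivity
      have h3 : (n : ℝ) < leafA d k := lt_of_mul_lt_mul_right (hk.trans_le h1) hp.le
      have h4 : n < leafA d k := by exact_mod_cast h3
      omega
    classical
    obtain ⟨k, hk, hmin⟩ : ∃ k, n < leafA d (k + 1) ∧ leafA d k ≤ n := by
      refine ⟨Nat.find hex, Nat.find_spec hex, ?_⟩
      rcases Nat.eq_zero_or_pos (Nat.find hex) with h | h
      · rw [h, leafA_small d 0 (by omega)]; exact hn
      · have := Nat.find_min hex (m := Nat.find hex - 1) (by omega)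
        rw [Nat.sub_add_cancel h] at this
        omega
    have hf := (fc_upper d k n hmin hk.le).2 hk
    have hf' : (fc (d + 1) n : ℝ) < k * n := by exact_mod_cast hf
    have hk2 : φ ^ k ≤ n * φ ^ (d + 2) := by
      refine (leafA_ge d k φ hφ1 hφ').trans ?_
      have : (leafA d k : ℝ) ≤ n := by exact_mod_cast hmin
      gcongr
    have hlog := Real.log_le_log (by positivity) hk2
    rw [Real.log_mul hn0.ne' (by positivity), Real.log_pow, Real.log_pow] at hlog
    have hk3 : (k : ℝ) ≤ Real.log n / Real.log φ + (d + 2) := by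
      rw [div_add' _ _ _ hl.ne', le_div_iff₀ hl]
      push_cast at hlog
      linarith
    have := mul_le_mul_of_nonneg_right hk3 hn0.le
    have e : (n : ℝ) * Real.log n / Real.log φ = Real.log n / Real.log φ * n := by ring
    rw [e]
    push_cast
    linarith
end
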